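/- For all integers m ≥ 1 and ℓ with 0 ≤ ℓ ≤ m−1 and 4ℓ ≥ 2m−3, one has ∑_{j=2}^∞ 1/j² < sin(π(ℓ+1)/(2m+1)); equivalently, ζ(2) − 1 = π²/6 − 1 < sin(π(ℓ+1)/(2m+1)). -/

import Mathlib

/-- For integers `m ≥ 1` and `0 ≤ ℓ ≤ m−1` with `4ℓ ≥ 2m−3`,
`ζ(2) − 1 = ∑_{j=2}^∞ 1/j² = π²/6 − 1 < sin(π(ℓ+1)/(2m+1))`. -/
theorem zeta_two_lt_sin (m ℓ : ℕ) (hm : 1 ≤ m) (hℓ : ℓ ≤ m - 1) (h : 2 * m ≤ 4 * ℓ + 3) :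
    (∑' j : ℕ, 1 / ((j : ℝ) + 2) ^ 2) < Real.sin (Real.pi * (ℓ + 1) / (2 * m + 1)) ∧
    Real.pi ^ 2 / 6 - 1 < Real.sin (Real.pi * (ℓ + 1) / (2 * m + 1)) := by
  have hsum : (∑' j : ℕ, 1 / ((j : ℝ) + 2) ^ 2) = Real.pi ^ 2 / 6 - 1 := by
    have h1 := hasSum_zeta_two.summable.sum_add_tsum_nat_add 2
    rw [hasSum_zeta_two.tsum_eq] at h1
    simp only [Finset.sum_range_succ, Finset.sum_range_zero] at h1
    push_cast at h1
    norm_num at h1 ⊢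
    linarith
  have hpi := Real.pi_pos
  have h1 : (ℓ : ℝ) + 1 ≤ m := by exact_mod_cast (by omega : ℓ + 1 ≤ m)
  have h2 : 2 * (m : ℝ) ≤ 4 * ℓ + 3 := by exact_mod_cast h
  have hd : (0 : ℝ) < 2 * m + 1 := by positivity
  have hlow : Real.pi / 4 ≤ Real.pi * (ℓ + 1) / (2 * m + 1) := by
    rw [le_div_iff₀ hd]
    nlinarith
  have hup : Real.pi * (ℓ + 1) / (2 * m + 1) ≤ Real.pi / 2 := by
    rw [div_le_iff₀ hd]
    nlinarith
  have hs : Real.sin (Real.pi / 4) ≤ Real.sin (Real.pi * (ℓ + 1) / (2 * m + 1)) :=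
    Real.sin_le_sin_of_le_of_le_pi_div_two (by linarith) hup hlow
  rw [Real.sin_pi_div_four] at hs
  have hsq : (1.4 : ℝ) < √2 := Real.lt_sqrt_of_sq_lt (by norm_num)
  have hpi2 := Real.pi_lt_d2
  have key : Real.pi ^ 2 / 6 - 1 < Real.sin (Real.pi * (ℓ + 1) / (2 * m + 1)) := by
    nlinarith
  exact ⟨hsum ▸ key, key⟩
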